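/- Let f : ℝ → ℝ be of bounded variation on the half line [b,∞) with lim_{t→∞} f(t) = 0, and Lebesgue measurable. Fix x < b. For each s ≠ 0 let F(s) = lim_{Y→∞} ∫_b^Y e^{-ist} f(t) dt (which exists). Then lim_{T→∞, S→0⁺} ∫_{S<|s|<T} e^{ixs} F(s) ds = 0, where the double limit means: for every ε > 0 there exist M > 0 and η > 0 such that the modulus of the integral over {s : S < |s| < T} is less than ε whenever T > M and 0 < S < η. -/

import Mathlib

/-! Let `V x` be the total variation of `f` on `[x, ∞)`. Partial summation over fine subdivisions
bounds `∫_b^Y h f` by `V b` times the supremum of the primitives `∫_b^c h`, uniformly in `Y`. By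
Fubini, integrating `e^{ixs} ∫_b^Y e^{-ist} f(t) dt` over `|s| < R` gives
`2 ∫_b^Y sin(R(t - x)) / (t - x) f(t) dt`, and the integral over `S < |s| < T` is the difference of
these for `R = T` and `R = S`. On `[b, ∞)` the primitives of the kernel are at most
`2 / (R(b - x))`, which settles `R → ∞`. For `R → 0⁺` they are merely bounded by `3`, so one first
picks `B` with `V B` small; the integral over `[b, B]` is at most `R V(b) (B - b)`. Dominated
convergence lets `Y → ∞` on each fixed annulus. -/

open Filter MeasureTheory Real Set Topology

/-- The oscillation of `f` between two points of `s` is bounded by the decrease of `V` between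
them. For `f` of bounded variation on `[b, ∞)` one takes for `V x` the variation of `f` on
`[x, ∞)`; working with an arbitrary majorant `V` avoids the extended nonnegative reals. -/
def DistLeDecreaseOn {α X : Type*} [Preorder α] [PseudoMetricSpace X] (f : α → X) (V : α → ℝ)
    (s : Set α) : Prop :=
  ∀ ⦃x⦄, x ∈ s → ∀ ⦃y⦄, y ∈ s → x ≤ y → dist (f x) (f y) ≤ V x - V y

namespace DistLeDecreaseOn

theorem mono {α X : Type*} [Preorder α] [PseudoMetricSpace X] {f : α → X} {V : α → ℝ}
    {s t : Set α} (hf : DistLeDecreaseOn f V t) (hst : s ⊆ t) : DistLeDecreaseOn f V s :=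
  fun _ hx _ hy hxy => hf (hst hx) (hst hy) hxy

theorem antitoneOn {α X : Type*} [Preorder α] [PseudoMetricSpace X] {f : α → X} {V : α → ℝ}
    {s : Set α} (hf : DistLeDecreaseOn f V s) : AntitoneOn V s :=
  fun _ hx _ hy hxy => sub_nonneg.1 (dist_nonneg.trans (hf hx hy hxy))

theorem dist_le_dist {α X : Type*} [LinearOrder α] [PseudoMetricSpace X] {f : α → X} {V : α → ℝ}
    {s : Set α} (hf : DistLeDecreaseOn f V s) {x y : α} (hx : x ∈ s) (hy : y ∈ s) :
    dist (f x) (f y) ≤ dist (V x) (V y) := by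
  rcases le_total x y with hxy | hyx
  · exact (hf hx hy hxy).trans (le_abs_self _)
  · rw [dist_comm (f x), dist_comm (V x)]
    exact (hf hy hx hyx).trans (le_abs_self _)

theorem continuousWithinAt {α X : Type*} [LinearOrder α] [TopologicalSpace α]
    [PseudoMetricSpace X] {f : α → X} {V : α → ℝ} {s : Set α} {x : α}
    (hf : DistLeDecreaseOn f V s) (hx : x ∈ s) (hV : ContinuousWithinAt V s x) :
    ContinuousWithinAt f s x := by
  rw [ContinuousWithinAt, tendsto_iff_dist_tendsto_zero] at hV ⊢
  refine squeeze_zero' (Eventually.of_forall fun _ => dist_nonneg) ?_ hV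
  filter_upwards [self_mem_nhdsWithin] with y hy using hf.dist_le_dist hy hx

theorem aestronglyMeasurable {X : Type*} [PseudoMetricSpace X] {f : ℝ → X} {V : ℝ → ℝ}
    {s : Set ℝ} (hf : DistLeDecreaseOn f V s) (hs : MeasurableSet s) :
    AEStronglyMeasurable f (volume.restrict s) := by
  set D := {x ∈ s | ¬ContinuousWithinAt V s x}
  have hD : D.Countable := hf.antitoneOn.countable_not_continuousWithinAt
  have hcont : ContinuousOn f (s \ D) := fun x hx =>
    (hf.continuousWithinAt hx.1 (not_not.1 fun h => hx.2 ⟨hx.1, h⟩)).mono sdiff_subset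
  rw [← Measure.restrict_congr_set (sdiff_null_ae_eq_self (hD.measure_zero volume))]
  exact hcont.aestronglyMeasurable (hs.diff hD.measurableSet)

theorem norm_le {E : Type*} [NormedAddCommGroup E] {f : ℝ → E} {V : ℝ → ℝ} {b : ℝ}
    (hf : DistLeDecreaseOn f V (Ici b)) (hf0 : Tendsto f atTop (𝓝 0))
    (hV0 : Tendsto V atTop (𝓝 0)) {x : ℝ} (hx : b ≤ x) : ‖f x‖ ≤ V x := by
  refine le_of_tendsto_of_tendsto (f := fun y => dist (f x) (f y)) (g := fun y => V x - V y)
    (b := atTop) ?_ ?_ ?_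
  · simpa using tendsto_const_nhds.dist hf0
  · simpa using hV0.const_sub (V x)
  · filter_upwards [eventually_ge_atTop x] with y hy using hf hx (hx.trans hy) hy

end DistLeDecreaseOn

theorem exists_distLeDecreaseOn_of_boundedVariationOn {X : Type*} [PseudoMetricSpace X]
    {f : ℝ → X} {b : ℝ} (hf : BoundedVariationOn f (Ici b)) :
    ∃ V : ℝ → ℝ, DistLeDecreaseOn f V (Ici b) ∧ Tendsto V atTop (𝓝 0) := by
  have hfin : ∀ {s : Set ℝ}, s ⊆ Ici b → eVariationOn f s ≠ ⊤ := fun h => hf.mono h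
  refine ⟨fun x => (eVariationOn f (Ici x)).toReal, fun x hx y hy hxy => ?_, ?_⟩
  · have hIcc : eVariationOn f (Icc x y) ≠ ⊤ := hfin fun z hz => hx.trans hz.1
    have hsplit := congrArg ENNReal.toReal
      (eVariationOn.union f (isGreatest_Icc hxy) (isLeast_Ici (a := y)))
    rw [Icc_union_Ici_eq_Ici hxy,
      ENNReal.toReal_add hIcc (hfin (Ici_subset_Ici.2 hy))] at hsplit
    have hdist : dist (f x) (f y) ≤ (eVariationOn f (Icc x y)).toReal :=
      BoundedVariationOn.dist_le hIcc (left_mem_Icc.2 hxy) (right_mem_Icc.2 hxy)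
    linarith
  · have hlim := (ENNReal.continuousAt_toReal ENNReal.zero_ne_top).tendsto.comp
      hf.tendsto_eVariationOn_Ici_zero
    rw [inf_eq_right.2 (le_principal_iff.2 (Ici_mem_atTop b))] at hlim
    refine hlim.congr' ?_
    filter_upwards [eventually_ge_atTop b] with x hx
    simp [max_eq_right hx]

theorem dist_le_sub_of_forall_sub_lt {X : Type*} [PseudoMetricSpace X] {g : ℝ → X} {v : ℝ → ℝ}
    {a b δ : ℝ} (hab : a ≤ b) (hδ : 0 < δ)
    (hg : ∀ c ∈ Icc a b, ∀ d ∈ Icc a b, c ≤ d → d - c < δ → dist (g c) (g d) ≤ v c - v d) :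
    dist (g a) (g b) ≤ v a - v b := by
  obtain ⟨n, hn⟩ := exists_nat_gt ((b - a) / δ)
  have hn0 : (0 : ℝ) < n := (div_nonneg (sub_nonneg.2 hab) hδ.le).trans_lt hn
  set t : ℕ → ℝ := fun k => a + k * ((b - a) / n) with ht
  have ht0 : t 0 = a := by simp [ht]
  have htn : t n = b := by
    simp only [ht]
    field_simp
    ring
  have hstep : ∀ k, t (k + 1) - t k = (b - a) / n := fun k => by
    simp only [ht]
    push_cast
    ring
  have hmono : Monotone t := monotone_nat_of_le_succ fun k =>
    sub_nonneg.1 ((hstep k).symm ▸ div_nonneg (sub_nonneg.2 hab) hn0.le)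
  have hmem : ∀ k ≤ n, t k ∈ Icc a b := fun k hk =>
    ⟨ht0 ▸ hmono k.zero_le, htn ▸ hmono hk⟩
  have hsmall : (b - a) / n < δ := (div_lt_comm₀ hδ hn0).1 hn
  calc dist (g a) (g b) = dist (g (t 0)) (g (t n)) := by rw [ht0, htn]
    _ ≤ ∑ k ∈ Finset.range n, dist (g (t k)) (g (t (k + 1))) :=
      dist_le_range_sum_dist (fun k => g (t k)) n
    _ ≤ ∑ k ∈ Finset.range n, (v (t k) - v (t (k + 1))) := by
      refine Finset.sum_le_sum fun k hk => ?_
      have hkn : k < n := Finset.mem_range.1 hk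
      exact hg _ (hmem k hkn.le) _ (hmem _ hkn) (hmono k.le_succ) ((hstep k).trans_lt hsmall)
    _ = v a - v b := by rw [Finset.sum_range_sub' (fun k => v (t k)), ht0, htn]

theorem exists_forall_norm_intervalIntegral_lt {E : Type*} [NormedAddCommGroup E] [NormedSpace ℝ E]
    {g : ℝ → E} {a b ε : ℝ} (hg : IntervalIntegrable g volume a b) (hε : 0 < ε) :
    ∃ δ > 0, ∀ c ∈ uIcc a b, ∀ d ∈ uIcc a b, dist c d < δ → ‖∫ t in c..d, g t‖ < ε := by
  have hunif : UniformContinuousOn (fun c => ∫ t in a..c, g t) (uIcc a b) :=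
    isCompact_uIcc.uniformContinuousOn_of_continuous
      (intervalIntegral.continuousOn_primitive_interval' hg left_mem_uIcc)
  obtain ⟨δ, hδ, hgδ⟩ := Metric.uniformContinuousOn_iff.1 hunif ε hε
  refine ⟨δ, hδ, fun c hc d hd hcd => ?_⟩
  have hga : ∀ e ∈ uIcc a b, IntervalIntegrable g volume a e := fun e he =>
    hg.mono_set (uIcc_subset_uIcc_left he)
  rw [← intervalIntegral.integral_interval_sub_left (hga d hd) (hga c hc), ← dist_eq_norm,
    dist_comm]
  exact hgδ c hc d hd hcd

namespace DistLeDecreaseOn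

section Integrability

variable {E : Type*} [NormedAddCommGroup E] {f : ℝ → E} {V : ℝ → ℝ} {a Y : ℝ}

theorem norm_le_norm_add_sub (hf : DistLeDecreaseOn f V (Icc a Y)) {t : ℝ} (ht : t ∈ Icc a Y) :
    ‖f t‖ ≤ ‖f Y‖ + (V a - V Y) := by
  have haY := ht.1.trans ht.2
  calc ‖f t‖ ≤ ‖f Y‖ + dist (f t) (f Y) := by
        rw [dist_eq_norm]; exact norm_le_norm_add_norm_sub' _ _
    _ ≤ ‖f Y‖ + (V a - V Y) := by
        gcongr
        linarith [hf ht (right_mem_Icc.2 haY) ht.2, hf.antitoneOn (left_mem_Icc.2 haY) ht ht.1]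

theorem intervalIntegrable (hf : DistLeDecreaseOn f V (Icc a Y)) (haY : a ≤ Y) :
    IntervalIntegrable f volume a Y := by
  rw [intervalIntegrable_iff_integrableOn_Icc_of_le haY]
  exact IntegrableOn.of_bound measure_Icc_lt_top (hf.aestronglyMeasurable measurableSet_Icc) _
    (ae_restrict_of_forall_mem measurableSet_Icc fun _ => hf.norm_le_norm_add_sub)

theorem intervalIntegrable_smul {𝕜 : Type*} [RCLike 𝕜] [NormedSpace 𝕜 E] {h : ℝ → 𝕜}
    (hf : DistLeDecreaseOn f V (Icc a Y)) (haY : a ≤ Y) (hh : IntervalIntegrable h volume a Y) :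
    IntervalIntegrable (fun t => h t • f t) volume a Y := by
  rw [intervalIntegrable_iff_integrableOn_Icc_of_le haY] at hh ⊢
  exact Integrable.smul_bdd hh _ (hf.aestronglyMeasurable measurableSet_Icc)
    (ae_restrict_of_forall_mem measurableSet_Icc fun _ => hf.norm_le_norm_add_sub)

end Integrability

section SecondMeanValue

variable {𝕜 E : Type*} [RCLike 𝕜] [NormedAddCommGroup E] [NormedSpace 𝕜 E] [NormedSpace ℝ E]
  {h : ℝ → 𝕜} {f : ℝ → E} {V : ℝ → ℝ} {a Y K : ℝ}

theorem norm_intervalIntegral_smul_sub_le (hf : DistLeDecreaseOn f V (Icc a Y)) (haY : a ≤ Y)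
    (hh : IntervalIntegrable h volume a Y) :
    ‖∫ t in a..Y, h t • (f t - f Y)‖ ≤ (∫ t in a..Y, ‖h t‖) * (V a - V Y) := by
  rw [← intervalIntegral.integral_mul_const]
  refine intervalIntegral.norm_integral_le_of_norm_le haY
    (Eventually.of_forall fun t ht => ?_) (hh.norm.mul_const _)
  have ht' : t ∈ Icc a Y := Ioc_subset_Icc_self ht
  rw [norm_smul, ← dist_eq_norm]
  gcongr
  linarith [hf ht' (right_mem_Icc.2 haY) ht.2, hf.antitoneOn (left_mem_Icc.2 haY) ht' ht'.1]

variable [CompleteSpace E]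

theorem dist_intervalIntegral_smul_sub_smul_le (hf : DistLeDecreaseOn f V (Icc a Y)) {c : ℝ}
    (hac : a ≤ c) (hcY : c ≤ Y) (hh : IntervalIntegrable h volume a Y)
    (hK : ‖∫ t in a..c, h t‖ ≤ K) :
    dist ((∫ t in a..Y, h t • f t) - (∫ t in a..Y, h t) • f Y)
        ((∫ t in a..c, h t • f t) - (∫ t in a..c, h t) • f c) ≤
      ((∫ t in c..Y, ‖h t‖) + K) * (V c - V Y) := by
  have haY := hac.trans hcY
  have hc : c ∈ uIcc a Y := uIcc_of_le haY ▸ ⟨hac, hcY⟩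
  have hh₁ : IntervalIntegrable h volume a c := hh.mono_set (uIcc_subset_uIcc_left hc)
  have hh₂ : IntervalIntegrable h volume c Y := hh.mono_set (uIcc_subset_uIcc_right hc)
  have hf₂ : DistLeDecreaseOn f V (Icc c Y) := hf.mono (Icc_subset_Icc_left hac)
  have hhf₁ := (hf.mono (Icc_subset_Icc_right hcY)).intervalIntegrable_smul hac hh₁
  have hhf₂ := hf₂.intervalIntegrable_smul hcY hh₂
  have hparts : ((∫ t in a..Y, h t • f t) - (∫ t in a..Y, h t) • f Y) -
      ((∫ t in a..c, h t • f t) - (∫ t in a..c, h t) • f c) =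
      (∫ t in c..Y, h t • (f t - f Y)) + (∫ t in a..c, h t) • (f c - f Y) := by
    simp_rw [smul_sub]
    rw [intervalIntegral.integral_sub hhf₂ ⟨hh₂.1.smul_const _, hh₂.2.smul_const _⟩,
      intervalIntegral.integral_smul_const,
      ← intervalIntegral.integral_add_adjacent_intervals hhf₁ hhf₂,
      ← intervalIntegral.integral_add_adjacent_intervals hh₁ hh₂, add_smul]
    abel
  rw [dist_eq_norm, hparts, add_mul]
  refine norm_add_le_of_le (hf₂.norm_intervalIntegral_smul_sub_le hcY hh₂) ?_
  rw [norm_smul, ← dist_eq_norm]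
  exact mul_le_mul hK (hf₂ (left_mem_Icc.2 hcY) (right_mem_Icc.2 hcY) hcY) dist_nonneg
    ((norm_nonneg _).trans hK)

theorem norm_intervalIntegral_smul_sub_smul_le (hf : DistLeDecreaseOn f V (Icc a Y))
    (haY : a ≤ Y) (hh : IntervalIntegrable h volume a Y)
    (hK : ∀ c ∈ Icc a Y, ‖∫ t in a..c, h t‖ ≤ K) :
    ‖(∫ t in a..Y, h t • f t) - (∫ t in a..Y, h t) • f Y‖ ≤ K * (V a - V Y) := by
  -- The increments of `W` are at most `(∫ ‖h‖ + K)` times the decrease of `V`, where the integral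
  -- is over the subinterval only; it disappears as the subdivision is refined.
  set W : ℝ → E := fun c => (∫ t in a..c, h t • f t) - (∫ t in a..c, h t) • f c with hW
  have hWa : W a = 0 := by simp [hW]
  have hbound : ∀ ε > 0, dist (W a) (W Y) ≤ (ε + K) * (V a - V Y) := fun ε hε => by
    obtain ⟨δ, hδ, hhδ⟩ := exists_forall_norm_intervalIntegral_lt hh.norm hε
    rw [uIcc_of_le haY] at hhδ
    rw [mul_sub]
    refine dist_le_sub_of_forall_sub_lt (v := fun c => (ε + K) * V c) haY hδ
      fun c hc d hd hcd hdist => ?_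
    have hhd : IntervalIntegrable h volume a d :=
      hh.mono_set (uIcc_subset_uIcc_left (uIcc_of_le haY ▸ hd))
    have hsmall : ∫ t in c..d, ‖h t‖ ≤ ε := by
      refine (le_abs_self _).trans (hhδ c hc d hd ?_).le
      rwa [dist_comm, Real.dist_eq, abs_of_nonneg (sub_nonneg.2 hcd)]
    rw [dist_comm, ← mul_sub]
    refine ((hf.mono (Icc_subset_Icc_right hd.2)).dist_intervalIntegral_smul_sub_smul_le
      hc.1 hcd hhd (hK c hc)).trans ?_
    gcongr
    exact sub_nonneg.2 (hf.antitoneOn hc hd hcd)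
  have hlim : Tendsto (fun ε => (ε + K) * (V a - V Y)) (𝓝[>] 0) (𝓝 (K * (V a - V Y))) :=
    (Continuous.tendsto' (by fun_prop) 0 _ (by simp)).mono_left nhdsWithin_le_nhds
  rw [← sub_zero (_ - _), ← hWa, ← dist_eq_norm, dist_comm]
  exact ge_of_tendsto hlim (eventually_mem_nhdsWithin.mono hbound)

theorem norm_intervalIntegral_smul_le (hf : DistLeDecreaseOn f V (Icc a Y))
    (haY : a ≤ Y) (hfY : ‖f Y‖ ≤ V Y) (hh : IntervalIntegrable h volume a Y)
    (hK : ∀ c ∈ Icc a Y, ‖∫ t in a..c, h t‖ ≤ K) :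
    ‖∫ t in a..Y, h t • f t‖ ≤ K * V a := by
  have hY := hK Y (right_mem_Icc.2 haY)
  calc ‖∫ t in a..Y, h t • f t‖
      ≤ ‖(∫ t in a..Y, h t) • f Y‖ + ‖(∫ t in a..Y, h t • f t) - (∫ t in a..Y, h t) • f Y‖ :=
        norm_le_norm_add_norm_sub' _ _
    _ ≤ K * V Y + K * (V a - V Y) := by
        refine add_le_add ?_ (hf.norm_intervalIntegral_smul_sub_smul_le haY hh hK)
        rw [norm_smul]
        exact mul_le_mul hY hfY (norm_nonneg _) ((norm_nonneg _).trans hY)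
    _ = K * V a := by ring

end SecondMeanValue

end DistLeDecreaseOn

theorem distLeDecreaseOn_self {α : Type*} [Preorder α] {V : α → ℝ} {s : Set α}
    (hV : AntitoneOn V s) : DistLeDecreaseOn V V s := fun _ hx _ hy hxy =>
  (abs_of_nonneg (sub_nonneg.2 (hV hx hy hxy))).le

theorem abs_intervalIntegral_sin_le_two (u v : ℝ) : |∫ t in u..v, sin t| ≤ 2 := by
  rw [integral_sin, abs_le]
  constructor <;> linarith [cos_le_one u, cos_le_one v, neg_one_le_cos u, neg_one_le_cos v]

theorem abs_intervalIntegral_sinc_le_two_div {u v : ℝ} (hu : 0 < u) (huv : u ≤ v) :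
    |∫ t in u..v, sinc t| ≤ 2 / u := by
  have hpos : Icc u v ⊆ Ioi 0 := fun t ht => hu.trans_le ht.1
  have hinv : AntitoneOn (fun t : ℝ => t⁻¹) (Icc u v) := inv_antitoneOn_Ioi.mono hpos
  have hv : ‖v⁻¹‖ ≤ v⁻¹ := (norm_of_nonneg (inv_nonneg.2 (hu.le.trans huv))).le
  have hsinc : ∫ t in u..v, sinc t = ∫ t in u..v, sin t • t⁻¹ :=
    intervalIntegral.integral_congr fun t ht => by
      rw [uIcc_of_le huv] at ht
      exact (sinc_of_ne_zero (hpos ht).ne').trans (div_eq_mul_inv _ _)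
  rw [hsinc, div_eq_mul_inv]
  exact (distLeDecreaseOn_self hinv).norm_intervalIntegral_smul_le huv hv
    (continuous_sin.intervalIntegrable u v) fun c _ => abs_intervalIntegral_sin_le_two u c

theorem abs_intervalIntegral_sinc_le_three {u v : ℝ} (hu : 0 ≤ u) (huv : u ≤ v) :
    |∫ t in u..v, sinc t| ≤ 3 := by
  have htail : ∀ a, 1 ≤ a → a ≤ v → |∫ t in a..v, sinc t| ≤ 2 := fun a ha hav =>
    (abs_intervalIntegral_sinc_le_two_div (one_pos.trans_le ha) hav).trans
      (div_le_self zero_le_two ha)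
  have hhead : ∀ c, u ≤ c → c ≤ 1 → |∫ t in u..c, sinc t| ≤ 1 := fun c huc hc => by
    refine (intervalIntegral.norm_integral_le_of_norm_le_const (f := sinc) fun t _ =>
      abs_sinc_le_one t).trans ?_
    rw [one_mul, abs_of_nonneg (sub_nonneg.2 huc)]
    linarith
  rcases le_total v 1 with hv | hv
  · linarith [hhead v huv hv]
  rcases le_total 1 u with hu' | hu'
  · linarith [htail u hu' huv]
  rw [← intervalIntegral.integral_add_adjacent_intervals
    (continuous_sinc.intervalIntegrable u 1) (continuous_sinc.intervalIntegrable 1 v)]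
  linarith [abs_add_le (∫ t in u..1, sinc t) (∫ t in 1..v, sinc t), hhead 1 hu' le_rfl,
    htail 1 le_rfl hv]

/-- The Dirichlet kernel `sin (R u) / u` of the real line, half the integral of `e^{ius}` over
`|s| < R`. Writing it with `Real.sinc` gives it the value `R` at `u = 0`. -/
noncomputable def dirichletKernel (R u : ℝ) : ℝ :=
  R * sinc (R * u)

theorem dirichletKernel_neg (R u : ℝ) : dirichletKernel R (-u) = dirichletKernel R u := by
  rw [dirichletKernel, dirichletKernel, mul_neg, sinc_neg]

theorem continuous_dirichletKernel (R : ℝ) : Continuous (dirichletKernel R) :=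
  continuous_const.mul (continuous_sinc.comp (continuous_const_mul R))

theorem abs_dirichletKernel_le {R : ℝ} (hR : 0 ≤ R) (u : ℝ) : |dirichletKernel R u| ≤ R := by
  rw [dirichletKernel, abs_mul, abs_of_nonneg hR]
  exact mul_le_of_le_one_right hR (abs_sinc_le_one _)

theorem intervalIntegrable_dirichletKernel_sub (R x c d : ℝ) :
    IntervalIntegrable (fun t => dirichletKernel R (t - x)) volume c d :=
  ((continuous_dirichletKernel R).comp (continuous_sub_right x)).intervalIntegrable c d

theorem intervalIntegral_dirichletKernel_sub (R x c d : ℝ) :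
    ∫ t in c..d, dirichletKernel R (t - x) = ∫ t in (R * (c - x))..(R * (d - x)), sinc t := by
  simp only [dirichletKernel, mul_sub, intervalIntegral.integral_const_mul,
    intervalIntegral.mul_integral_comp_mul_sub]

section DirichletKernel

variable {E : Type*} [NormedAddCommGroup E] [NormedSpace ℝ E] [CompleteSpace E]
  {f : ℝ → E} {V : ℝ → ℝ} {b x : ℝ}

theorem norm_intervalIntegral_dirichletKernel_smul_le (hf : DistLeDecreaseOn f V (Ici b))
    (hfV : ∀ t ∈ Ici b, ‖f t‖ ≤ V t) (hx : x < b) {R Y : ℝ} (hR : 0 < R) (hY : b ≤ Y) :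
    ‖∫ t in b..Y, dirichletKernel R (t - x) • f t‖ ≤ 2 / (R * (b - x)) * V b := by
  refine (hf.mono Icc_subset_Ici_self).norm_intervalIntegral_smul_le hY (hfV Y hY)
    (intervalIntegrable_dirichletKernel_sub R x b Y) fun c hc => ?_
  rw [intervalIntegral_dirichletKernel_sub]
  refine abs_intervalIntegral_sinc_le_two_div (mul_pos hR (sub_pos.2 hx)) ?_
  gcongr
  exact hc.1

theorem norm_intervalIntegral_dirichletKernel_smul_le_add (hf : DistLeDecreaseOn f V (Ici b))
    (hfV : ∀ t ∈ Ici b, ‖f t‖ ≤ V t) {B R Y : ℝ} (hx : x ≤ b) (hR : 0 ≤ R) (hB : b ≤ B)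
    (hY : B ≤ Y) :
    ‖∫ t in b..Y, dirichletKernel R (t - x) • f t‖ ≤ R * V b * (B - b) + 3 * V B := by
  have hii : ∀ c d, b ≤ c → c ≤ d →
      IntervalIntegrable (fun t => dirichletKernel R (t - x) • f t) volume c d :=
    fun c d hc hd => (hf.mono fun t ht => hc.trans ht.1).intervalIntegrable_smul hd
      (intervalIntegrable_dirichletKernel_sub R x c d)
  rw [← intervalIntegral.integral_add_adjacent_intervals (hii b B le_rfl hB) (hii B Y hB hY)]
  refine norm_add_le_of_le ?_ ?_
  · rw [← abs_of_nonneg (sub_nonneg.2 hB)]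
    refine intervalIntegral.norm_integral_le_of_norm_le_const fun t ht => ?_
    rw [uIoc_of_le hB] at ht
    have hbt : t ∈ Ici b := ht.1.le
    rw [norm_smul]
    exact mul_le_mul (abs_dirichletKernel_le hR _)
      ((hfV t hbt).trans (hf.antitoneOn self_mem_Ici hbt hbt)) (norm_nonneg _) hR
  · refine (hf.mono fun t ht => hB.trans ht.1).norm_intervalIntegral_smul_le hY
      (hfV Y (hB.trans hY)) (intervalIntegrable_dirichletKernel_sub R x B Y) fun c hc => ?_
    rw [intervalIntegral_dirichletKernel_sub]
    refine abs_intervalIntegral_sinc_le_three (mul_nonneg hR (by linarith)) ?_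
    gcongr
    exact hc.1

theorem eventually_atTop_norm_intervalIntegral_dirichletKernel_smul_le
    (hf : DistLeDecreaseOn f V (Ici b)) (hfV : ∀ t ∈ Ici b, ‖f t‖ ≤ V t) (hx : x < b) {ε : ℝ}
    (hε : 0 < ε) :
    ∀ᶠ R in atTop, ∀ᶠ Y in atTop, ‖∫ t in b..Y, dirichletKernel R (t - x) • f t‖ ≤ ε := by
  have hlim : Tendsto (fun R => 2 / (R * (b - x)) * V b) atTop (𝓝 0) := by
    simpa using ((tendsto_id.atTop_mul_const (sub_pos.2 hx)).const_div_atTop 2).mul_const (V b)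
  filter_upwards [hlim.eventually_le_const hε, eventually_gt_atTop 0] with R hRε hR
  filter_upwards [eventually_ge_atTop b] with Y hY
  exact (norm_intervalIntegral_dirichletKernel_smul_le hf hfV hx hR hY).trans hRε

theorem eventually_nhdsGT_norm_intervalIntegral_dirichletKernel_smul_le
    (hf : DistLeDecreaseOn f V (Ici b)) (hfV : ∀ t ∈ Ici b, ‖f t‖ ≤ V t)
    (hV : Tendsto V atTop (𝓝 0)) (hx : x ≤ b) {ε : ℝ} (hε : 0 < ε) :
    ∀ᶠ R in 𝓝[>] 0, ∀ᶠ Y in atTop, ‖∫ t in b..Y, dirichletKernel R (t - x) • f t‖ ≤ ε := by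
  obtain ⟨B, hVB, hB⟩ := ((hV.eventually_lt_const (by positivity : 0 < ε / 3)).and
    (eventually_ge_atTop b)).exists
  have hlim : Tendsto (fun R => R * V b * (B - b) + 3 * V B) (𝓝[>] 0) (𝓝 (3 * V B)) :=
    (Continuous.tendsto' (by fun_prop) 0 _ (by simp)).mono_left nhdsWithin_le_nhds
  filter_upwards [hlim.eventually_le_const (by linarith : 3 * V B < ε), self_mem_nhdsWithin]
    with R hRε hR
  filter_upwards [eventually_ge_atTop B] with Y hY
  exact (norm_intervalIntegral_dirichletKernel_smul_le_add hf hfV hx (le_of_lt hR) hB hY).trans hRε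

end DirichletKernel

theorem intervalIntegral_exp_mul_mul_I_symm (R w : ℝ) :
    ∫ s in -R..R, Complex.exp (↑(w * s) * Complex.I) = 2 * dirichletKernel R w := by
  rw [dirichletKernel]
  rcases eq_or_ne w 0 with rfl | hw
  · simp [← two_mul]
  · rw [intervalIntegral.integral_comp_mul_left (fun r : ℝ => Complex.exp (r * Complex.I)) hw,
      mul_neg, integral_exp_mul_I_eq_sinc, Complex.real_smul, mul_comm R w]
    have hw' : (w : ℂ) ≠ 0 := Complex.ofReal_ne_zero.2 hw
    push_cast
    field_simp

theorem intervalIntegral_exp_mul_exp_neg (R x t : ℝ) :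
    ∫ s in -R..R, Complex.exp (Complex.I * x * s) * Complex.exp (-(Complex.I * s * t)) =
      ((2 * dirichletKernel R (t - x) : ℝ) : ℂ) := by
  have hexp : ∀ s : ℝ, Complex.exp (Complex.I * x * s) * Complex.exp (-(Complex.I * s * t)) =
      Complex.exp (↑((x - t) * s) * Complex.I) := fun s => by
    rw [← Complex.exp_add]
    push_cast
    ring_nf
  simp_rw [hexp]
  rw [intervalIntegral_exp_mul_mul_I_symm, ← neg_sub t x, dirichletKernel_neg,
    Complex.ofReal_mul, Complex.ofReal_ofNat]

theorem norm_exp_I_mul_mul (x s : ℝ) : ‖Complex.exp (Complex.I * x * s)‖ = 1 := by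
  simp [Complex.norm_exp]

theorem norm_exp_neg_I_mul_mul (s t : ℝ) : ‖Complex.exp (-(Complex.I * s * t))‖ = 1 := by
  simp [Complex.norm_exp]

section TruncatedTransform

variable {E : Type*} [NormedAddCommGroup E] [NormedSpace ℂ E] {f : ℝ → E} {V : ℝ → ℝ} {b Y : ℝ}

/-- The Fourier transform `∫_b^Y e^{-ist} f(t) dt` of `f` restricted to `[b, Y]`, with the
normalization `e^{-ist}`. Letting `Y → ∞` defines the improper transform of `f` on `[b, ∞)`. -/
noncomputable def truncatedFourier (f : ℝ → E) (b Y s : ℝ) : E :=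
  ∫ t in b..Y, Complex.exp (-(Complex.I * s * t)) • f t

theorem intervalIntegral_exp_smul_truncatedFourier_symm [CompleteSpace E]
    (hf : IntervalIntegrable f volume b Y) (x R : ℝ) :
    ∫ s in -R..R, Complex.exp (Complex.I * x * s) • truncatedFourier f b Y s =
      (2 : ℝ) • ∫ t in b..Y, dirichletKernel R (t - x) • f t := by
  have hint : Integrable (fun p : ℝ × ℝ =>
      (Complex.exp (Complex.I * x * p.1) * Complex.exp (-(Complex.I * p.1 * p.2))) • f p.2)
      ((volume.restrict (uIoc (-R) R)).prod (volume.restrict (uIoc b Y))) := by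
    have : IsFiniteMeasure (volume.restrict (uIoc (-R) R)) := by
      rw [uIoc]
      infer_instance
    refine Integrable.bdd_smul (C := 1) ?_ (Continuous.aestronglyMeasurable (by fun_prop)) ?_
    · exact (intervalIntegrable_iff.1 hf).comp_snd _
    · refine Eventually.of_forall fun p => ?_
      rw [norm_mul, norm_exp_I_mul_mul, norm_exp_neg_I_mul_mul, one_mul]
  simp_rw [truncatedFourier, ← intervalIntegral.integral_smul, smul_smul]
  rw [intervalIntegral_intervalIntegral_swap
    (by rwa [IntegrableOn, Measure.volume_eq_prod, ← Measure.prod_restrict])]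
  simp_rw [intervalIntegral.integral_smul_const, intervalIntegral_exp_mul_exp_neg]
  simp only [Complex.coe_smul]

theorem continuous_truncatedFourier (hf : IntervalIntegrable f volume b Y) :
    Continuous (truncatedFourier f b Y) := by
  refine intervalIntegral.continuous_of_dominated_interval (bound := fun t => ‖f t‖)
    (fun s => ?_) (fun s => ?_) hf.norm ?_
  · exact (Continuous.aestronglyMeasurable (by fun_prop)).smul
      (intervalIntegrable_iff.1 hf).aestronglyMeasurable
  · refine Eventually.of_forall fun t _ => ?_
    rw [norm_smul, norm_exp_neg_I_mul_mul, one_mul]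
  · exact Eventually.of_forall fun t _ => by fun_prop

theorem norm_intervalIntegral_exp_neg_le {s : ℝ} (hs : s ≠ 0) (c d : ℝ) :
    ‖∫ t in c..d, Complex.exp (-(Complex.I * s * t))‖ ≤ 2 / |s| := by
  have hs' : -(Complex.I * s) ≠ 0 := by simpa using hs
  simp_rw [← neg_mul (Complex.I * (s : ℂ))]
  rw [integral_exp_mul_complex hs', norm_div, norm_neg, norm_mul, Complex.norm_I, one_mul,
    Complex.norm_real, norm_eq_abs]
  gcongr
  refine (norm_sub_le _ _).trans_eq ?_
  simp_rw [neg_mul, norm_exp_neg_I_mul_mul]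
  exact one_add_one_eq_two

variable [CompleteSpace E]

theorem norm_truncatedFourier_le (hf : DistLeDecreaseOn f V (Icc b Y)) (hY : b ≤ Y)
    (hfY : ‖f Y‖ ≤ V Y) {s : ℝ} (hs : s ≠ 0) :
    ‖truncatedFourier f b Y s‖ ≤ 2 / |s| * V b :=
  hf.norm_intervalIntegral_smul_le hY hfY (Continuous.intervalIntegrable (by fun_prop) b Y)
    fun c _ => norm_intervalIntegral_exp_neg_le hs b c

theorem tendsto_intervalIntegral_exp_smul_truncatedFourier (hf : DistLeDecreaseOn f V (Ici b))
    (hfV : ∀ t ∈ Ici b, ‖f t‖ ≤ V t) {F : ℝ → E}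
    (hF : ∀ s, s ≠ 0 → Tendsto (fun Y => truncatedFourier f b Y s) atTop (𝓝 (F s)))
    (x : ℝ) {A B : ℝ} (hAB : (0 : ℝ) ∉ uIcc A B) :
    Tendsto (fun Y => ∫ s in A..B, Complex.exp (Complex.I * x * s) • truncatedFourier f b Y s) atTop
      (𝓝 (∫ s in A..B, Complex.exp (Complex.I * x * s) • F s)) := by
  have hne : ∀ s ∈ uIcc A B, s ≠ 0 := fun s hs => ne_of_mem_of_not_mem hs hAB
  have hfY : ∀ Y, DistLeDecreaseOn f V (Icc b Y) := fun Y => hf.mono Icc_subset_Ici_self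
  refine intervalIntegral.tendsto_integral_filter_of_dominated_convergence
    (fun s => 2 / |s| * V b) ?_ ?_ ?_ ?_
  · filter_upwards [eventually_ge_atTop b] with Y hY
    exact Continuous.aestronglyMeasurable (.smul (by fun_prop)
      (continuous_truncatedFourier ((hfY Y).intervalIntegrable hY)))
  · filter_upwards [eventually_ge_atTop b] with Y hY
    refine Eventually.of_forall fun s hs => ?_
    rw [norm_smul, norm_exp_I_mul_mul, one_mul]
    exact norm_truncatedFourier_le (hfY Y) hY (hfV Y hY)
      (hne s (uIoc_subset_uIcc hs))
  · refine ContinuousOn.intervalIntegrable fun s hs => ?_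
    have := abs_ne_zero.2 (hne s hs)
    exact ContinuousAt.continuousWithinAt (by fun_prop (disch := assumption))
  · exact Eventually.of_forall fun s hs => (hF s (hne s (uIoc_subset_uIcc hs))).const_smul _

theorem intervalIntegral_exp_smul_truncatedFourier_add (hf : IntervalIntegrable f volume b Y)
    (x S T : ℝ) :
    (∫ s in -T..-S, Complex.exp (Complex.I * x * s) • truncatedFourier f b Y s) +
        ∫ s in S..T, Complex.exp (Complex.I * x * s) • truncatedFourier f b Y s =
      (2 : ℝ) • ((∫ t in b..Y, dirichletKernel T (t - x) • f t) -
        ∫ t in b..Y, dirichletKernel S (t - x) • f t) := by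
  have hint : ∀ A B, IntervalIntegrable
      (fun s : ℝ => Complex.exp (Complex.I * x * s) • truncatedFourier f b Y s) volume A B :=
    (Continuous.smul (by fun_prop) (continuous_truncatedFourier hf)).intervalIntegrable
  rw [smul_sub, ← intervalIntegral_exp_smul_truncatedFourier_symm hf,
    ← intervalIntegral_exp_smul_truncatedFourier_symm hf,
    intervalIntegral.integral_interval_sub_interval_comm (hint _ _) (hint _ _) (hint _ _),
    intervalIntegral.integral_symm S T, sub_neg_eq_add]

end TruncatedTransform

theorem pringsheim_tail_vanishes_general {E : Type*} [NormedAddCommGroup E] [NormedSpace ℂ E]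
    [CompleteSpace E] {b : ℝ} {f : ℝ → E} (hbv : BoundedVariationOn f (Ici b))
    (htop : Tendsto f atTop (𝓝 0)) {x : ℝ} (hx : x < b) {F : ℝ → E}
    (hF : ∀ s, s ≠ 0 → Tendsto (fun Y => truncatedFourier f b Y s) atTop (𝓝 (F s))) :
    Tendsto
      (fun P : ℝ × ℝ => (∫ s in -P.1..-P.2, Complex.exp (Complex.I * x * s) • F s) +
        ∫ s in P.2..P.1, Complex.exp (Complex.I * x * s) • F s)
      (atTop ×ˢ 𝓝[>] 0) (𝓝 0) := by
  obtain ⟨V, hfV, hV⟩ := exists_distLeDecreaseOn_of_boundedVariationOn hbv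
  have hfle : ∀ t ∈ Ici b, ‖f t‖ ≤ V t := fun t ht => hfV.norm_le htop hV ht
  rw [Metric.tendsto_nhds]
  intro ε hε
  have hT := eventually_atTop_norm_intervalIntegral_dirichletKernel_smul_le hfV hfle hx
    (by positivity : 0 < ε / 8)
  have hS := eventually_nhdsGT_norm_intervalIntegral_dirichletKernel_smul_le hfV hfle hV hx.le
    (by positivity : 0 < ε / 8)
  filter_upwards [(hT.and (eventually_gt_atTop 0)).prod_mk (hS.and self_mem_nhdsWithin)]
    with ⟨T, S⟩ ⟨⟨hTY, hT0⟩, hSY, hS0⟩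
  have hneg : (0 : ℝ) ∉ uIcc (-T) (-S) :=
    notMem_uIcc_of_gt (neg_neg_of_pos hT0) (neg_neg_of_pos hS0)
  have hpos : (0 : ℝ) ∉ uIcc S T := notMem_uIcc_of_lt hS0 hT0
  have hlim := (tendsto_intervalIntegral_exp_smul_truncatedFourier hfV hfle hF x hneg).add
    (tendsto_intervalIntegral_exp_smul_truncatedFourier hfV hfle hF x hpos)
  rw [dist_zero_right]
  refine (le_of_tendsto hlim.norm ?_).trans_lt (half_lt_self hε)
  filter_upwards [hTY, hSY, eventually_ge_atTop b] with Y hTY hSY hY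
  have hfY := (hfV.mono Icc_subset_Ici_self).intervalIntegrable hY
  rw [intervalIntegral_exp_smul_truncatedFourier_add hfY, norm_smul, norm_of_nonneg zero_le_two]
  linarith [norm_sub_le_of_le hTY hSY]

/-- Tail contribution in Pringsheim's theorem: `f` of bounded variation on `[b,∞)` with
limit `0` at `∞`, measurable, and `x < b`.  With `F(s) = lim_{Y→∞} ∫_b^Y e^{-ist} f(t) dt`
for `s ≠ 0`, one has `lim_{T→∞, S→0⁺} ∫_{S<|s|<T} e^{ixs} F(s) ds = 0`, where the
integral over `{S<|s|<T}` is `∫_{-T}^{-S} + ∫_S^T`. -/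
theorem pringsheim_tail_vanishes (b : ℝ) (f : ℝ → ℝ)
    (hmeas : Measurable f)
    (hbv : BoundedVariationOn f (Set.Ici b))
    (htop : Filter.Tendsto f Filter.atTop (nhds 0))
    (x : ℝ) (hx : x < b)
    (F : ℝ → ℂ)
    (hF : ∀ s : ℝ, s ≠ 0 → Filter.Tendsto
      (fun Y : ℝ => ∫ t in b..Y, Complex.exp (-(Complex.I * s * t)) * ((f t : ℝ) : ℂ))
      Filter.atTop (nhds (F s))) :
    Filter.Tendsto
      (fun P : ℝ × ℝ =>
        (∫ s in (-P.1)..(-P.2), Complex.exp (Complex.I * x * s) * F s) +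
          ∫ s in P.2..P.1, Complex.exp (Complex.I * x * s) * F s)
      (Filter.atTop ×ˢ nhdsWithin 0 (Set.Ioi 0))
      (nhds 0) := by
  have hbv' : BoundedVariationOn (fun t => (f t : ℂ)) (Ici b) :=
    Complex.isometry_ofReal.lipschitz.comp_boundedVariationOn hbv
  have htop' : Tendsto (fun t => (f t : ℂ)) atTop (𝓝 0) :=
    Complex.ofReal_zero ▸ (Complex.continuous_ofReal.tendsto 0).comp htop
  exact pringsheim_tail_vanishes_general hbv' htop' hx hF
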